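/- Let L = {0, +, −, <, P} with P a unary relation symbol, and let M be the L-structure whose universe is the real numbers with the standard ordered additive group structure and with P interpreted as {2^k : k ∈ ℕ}. Then Th(M) does not have finite burden: for every n ∈ ℕ, M itself witnesses an inp-pattern of depth n in a single variable. -/

import Mathlib

/- Common model-theoretic definitions. -/

open FirstOrder Set

universe u v w

/-- An inp-pattern of depth `κ` in `nvars` free variables witnessed in the `L`-structure `N`:
formulas `φ α (x̄; ȳ_α)` (with `m α` parameter variables), positive integers `k α`, and
parameter tuples `b α i` such that each row is `k α`-inconsistent (no tuple of `N` realizes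
`φ α (x̄; b α i)` for `k α` distinct values of `i`), while every path is finitely consistent. -/
def IsInpPattern (L : FirstOrder.Language.{u, v}) (N : Type*) [L.Structure N]
    (κ : Type*) (nvars : ℕ) : Prop :=
  ∃ (m : κ → ℕ) (φ : ∀ α : κ, L.Formula (Fin nvars ⊕ Fin (m α)))
    (k : κ → ℕ) (b : ∀ α : κ, ℕ → Fin (m α) → N),
    (∀ α, 1 ≤ k α) ∧
    (∀ α : κ, ¬ ∃ (x : Fin nvars → N) (s : Finset ℕ),
        k α ≤ s.card ∧ ∀ i ∈ s, (φ α).Realize (Sum.elim x (b α i))) ∧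
    (∀ (η : κ → ℕ) (S : Finset κ), ∃ x : Fin nvars → N,
        ∀ α ∈ S, (φ α).Realize (Sum.elim x (b α (η α))))

/-- `Th(M)` has burden at least `n`: some model of `Th(M)` witnesses an inp-pattern of
depth `n` in a single variable. -/
def HasBurdenAtLeast (L : FirstOrder.Language.{u, v}) (M : Type w) [L.Structure M]
    (n : ℕ) : Prop :=
  ∃ N : FirstOrder.Language.Theory.ModelType.{u, v, max u v w} (L.completeTheory M),
    IsInpPattern L N (Fin n) 1

/-- `Th(M)` has finite burden: for some `n`, no model of `Th(M)` witnesses an inp-pattern of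
depth `n + 1` in a single variable. -/
def HasFiniteBurden (L : FirstOrder.Language.{u, v}) (M : Type w) [L.Structure M] : Prop :=
  ∃ n : ℕ, ¬ HasBurdenAtLeast L M (n + 1)

/-- `Th(M)` is strong: no model of `Th(M)` witnesses an inp-pattern of depth `ω` in any
finite tuple of variables. -/
def IsStrong (L : FirstOrder.Language.{u, v}) (M : Type w) [L.Structure M] : Prop :=
  ∀ (N : FirstOrder.Language.Theory.ModelType.{u, v, max u v w} (L.completeTheory M))
    (nvars : ℕ), ¬ IsInpPattern L N ℕ nvars

/-- A set `D` in a linear order is discrete if each of its points is isolated in it. -/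
def DiscreteIn {R : Type*} [LinearOrder R] (D : Set R) : Prop :=
  ∀ x ∈ D, ∃ a b : R, a < x ∧ x < b ∧ Set.Ioo a b ∩ D = {x}

/-- `M` is definably complete: every nonempty definable subset of `R` that is bounded above
has a least upper bound. -/
def DefinablyComplete (L : FirstOrder.Language.{u, v}) (R : Type w)
    [LinearOrder R] [L.Structure R] : Prop :=
  ∀ X : Set R, (Set.univ : Set R).Definable₁ L X → X.Nonempty → BddAbove X →
    ∃ a : R, IsLUB X a

/-- Function symbols of the language `{0, +, −, <, P}`: a constant `0`, unary `−`,
binary `+`. -/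
inductive OagPFunc : ℕ → Type
  | zero : OagPFunc 0
  | neg : OagPFunc 1
  | add : OagPFunc 2

/-- Relation symbols of the language `{0, +, −, <, P}`: binary `<` and unary `P`. -/
inductive OagPRel : ℕ → Type
  | lt : OagPRel 2
  | P : OagPRel 1

/-- The language `{0, +, −, <, P}` with `P` a unary relation symbol. -/
def LoagP : FirstOrder.Language := ⟨OagPFunc, OagPRel⟩

/-- The `{0, +, −, <, P}`-structure on `ℝ` with the standard ordered additive group
structure and `P` interpreted as `{2 ^ k : k ∈ ℕ}`. -/
instance : LoagP.Structure ℝ where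
  funMap {n} f v :=
    match f with
    | .zero => 0
    | .neg => -(v 0)
    | .add => v 0 + v 1
  RelMap {n} r v :=
    match r with
    | .lt => v 0 < v 1
    | .P => ∃ k : ℕ, v 0 = 2 ^ k

/-! The theorem rests on the uniqueness of binary expansions. Let `φₙ(x; y)` say that `x` is a sum
of `n` distinct powers of two, one of which is `y`. As `x` determines the `n` powers, it realizes
`φₙ(x; 2 ^ e)` for at most `n` values of `e`; on the other hand any `n` exponents are realized
together, by the sum of the corresponding powers. Hence every partition of the powers of two into
`n` infinite rows is an inp-pattern of depth `n` for `φₙ`. -/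

open FirstOrder.Language

section FirstOrderLanguage

variable {L : FirstOrder.Language.{u, v}}

/-- The formula stating that the values of the variables `f i` are pairwise distinct. -/
noncomputable def distinctFormula {ι α : Type*} [Finite ι] (f : ι → α) : L.Formula α :=
  Formula.iInf fun q : {q : ι × ι // q.1 ≠ q.2} ↦
    ∼((Term.var (f q.1.1)).equal (Term.var (f q.1.2)))

theorem realize_distinctFormula {ι α M : Type*} [Finite ι] [L.Structure M] (f : ι → α)
    (v : α → M) : (distinctFormula (L := L) f).Realize v ↔ Function.Injective (v ∘ f) := by
  simp only [distinctFormula, Formula.realize_iInf, Formula.realize_not, Formula.realize_equal,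
    Term.realize_var, Subtype.forall, Prod.forall, Function.Injective, Function.comp_apply]
  exact forall₂_congr fun _ _ ↦ not_imp_not

variable {κ : Type*} {nvars : ℕ}

theorem IsInpPattern.of_equiv {M N : Type*} [L.Structure M] [L.Structure N] (e : M ≃[L] N)
    (h : IsInpPattern L M κ nvars) : IsInpPattern L N κ nvars := by
  obtain ⟨m, φ, k, b, hk, hrow, hpath⟩ := h
  have realize_iff (α : κ) (x : Fin nvars → M) (y : Fin (m α) → M) :
      (φ α).Realize (Sum.elim (e ∘ x) (e ∘ y)) ↔ (φ α).Realize (Sum.elim x y) := by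
    rw [← Sum.comp_elim]
    exact StrongHomClass.realize_formula e (φ α)
  refine ⟨m, φ, k, fun α i ↦ e ∘ b α i, hk, ?_, fun η S ↦ ?_⟩
  · rintro α ⟨x, s, hs, hx⟩
    obtain ⟨x, rfl⟩ := e.surjective.comp_left x
    exact hrow α ⟨x, s, hs, fun i hi ↦ (realize_iff α x _).1 (hx i hi)⟩
  · obtain ⟨x, hx⟩ := hpath η S
    exact ⟨e ∘ x, fun α hα ↦ (realize_iff α x _).2 (hx α hα)⟩

theorem isInpPattern_of_card_le [Finite κ] {N : Type*} [L.Structure N] {m k : ℕ}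
    (φ : L.Formula (Fin nvars ⊕ Fin m)) (b : ℕ → Fin m → N)
    (card_le : ∀ (x : Fin nvars → N) (s : Finset ℕ),
      (∀ i ∈ s, φ.Realize (Sum.elim x (b i))) → s.card ≤ k)
    (exists_realize : ∀ s : Finset ℕ, s.card = Nat.card κ →
      ∃ x : Fin nvars → N, ∀ i ∈ s, φ.Realize (Sum.elim x (b i))) :
    IsInpPattern L N κ nvars := by
  obtain ⟨code, code_injective⟩ := exists_injective_nat (κ × ℕ)
  refine ⟨fun _ ↦ m, fun _ ↦ φ, fun _ ↦ k + 1, fun α i ↦ b (code (α, i)),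
    fun _ ↦ k.succ_pos, ?_, fun η S ↦ ?_⟩
  · rintro α ⟨x, s, hs, hx⟩
    let row : ℕ ↪ ℕ := ⟨fun i ↦ code (α, i), code_injective.comp (Prod.mk_right_injective α)⟩
    have hrow : (s.map row).card ≤ k := card_le x _ (Finset.forall_mem_map.2 hx)
    rw [Finset.card_map] at hrow
    exact absurd hrow (Nat.not_le_of_lt hs)
  · have := Fintype.ofFinite κ
    let path : κ ↪ ℕ := ⟨fun α ↦ code (α, η α), fun _ _ h ↦ (Prod.ext_iff.1 (code_injective h)).1⟩
    obtain ⟨x, hx⟩ := exists_realize (Finset.univ.map path)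
      (by rw [Finset.card_map, Finset.card_univ, Nat.card_eq_fintype_card])
    exact ⟨x, fun α _ ↦ hx _ (Finset.mem_map_of_mem path (Finset.mem_univ α))⟩

variable {M : Type w} [L.Structure M] [Nonempty M]

theorem IsInpPattern.hasBurdenAtLeast {n : ℕ} (h : IsInpPattern L M (Fin n) 1) :
    HasBurdenAtLeast L M n :=
  ⟨(Theory.ModelType.of (L.completeTheory M) M).ulift,
    h.of_equiv (Equiv.inducedStructureEquiv Equiv.ulift.symm)⟩

theorem not_hasFiniteBurden_of_forall_isInpPattern (h : ∀ n : ℕ, IsInpPattern L M (Fin n) 1) :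
    ¬ HasFiniteBurden L M :=
  fun ⟨n, hn⟩ ↦ hn (h (n + 1)).hasBurdenAtLeast

end FirstOrderLanguage

theorem injective_sum_pow {R : Type*} [Semiring R] [CharZero R] {n : ℕ} (hn : 2 ≤ n) :
    Function.Injective fun s : Finset ℕ ↦ ∑ i ∈ s, (n : R) ^ i := by
  have h := (Nat.cast_injective (R := R)).comp (Finset.geomSum_injective hn)
  simpa only [Function.comp_def, Nat.cast_sum, Nat.cast_pow] using h

namespace LoagP

variable {α : Type*}

/-- The term `t₁ + (t₂ + (⋯ + 0))` adding up a list of terms. -/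
def sumTerm (l : List (LoagP.Term α)) : LoagP.Term α :=
  l.foldr (Functions.apply₂ OagPFunc.add) (Constants.term OagPFunc.zero)

theorem realize_sumTerm (v : α → ℝ) (l : List (LoagP.Term α)) :
    (sumTerm l).realize v = (l.map (Term.realize v)).sum := by
  induction l with
  | nil => exact Term.realize_constants
  | cons t l ih =>
    rw [List.map_cons, List.sum_cons, ← ih]
    exact Term.realize_functions_apply₂

/-- The formula `P(t)`. -/
def isPow (t : LoagP.Term α) : LoagP.Formula α :=
  Relations.formula₁ (L := LoagP) OagPRel.P t

theorem realize_isPow (v : α → ℝ) (t : LoagP.Term α) :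
    (isPow t).Realize v ↔ ∃ k : ℕ, t.realize v = 2 ^ k :=
  Formula.realize_rel₁

/-- The formula `φₙ(x; y)` of the inp-patterns: `x` is the sum of `n` distinct elements of `P`, one
of which is `y`. -/
noncomputable def isSummand (n : ℕ) : LoagP.Formula (Fin 1 ⊕ Fin 1) :=
  Formula.iExs (Fin n)
    ((Formula.iInf fun i ↦ isPow (.var (.inr i))) ⊓ distinctFormula Sum.inr ⊓
      (Formula.iSup fun i ↦ (Term.var (.inr i)).equal (.var (.inl (.inr 0)))) ⊓
      (Term.var (.inl (.inl 0))).equal (sumTerm (List.ofFn fun i ↦ .var (.inr i))))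

theorem realize_isSummand {n : ℕ} (v : Fin 1 ⊕ Fin 1 → ℝ) :
    (isSummand n).Realize v ↔ ∃ p : Fin n → ℝ, (∀ i, ∃ k : ℕ, p i = 2 ^ k) ∧
      Function.Injective p ∧ (∃ i, p i = v (.inr 0)) ∧ v (.inl 0) = ∑ i, p i := by
  simp only [isSummand, Formula.realize_iExs, Formula.realize_inf, Formula.realize_iInf,
    Formula.realize_iSup, Formula.realize_equal, realize_isPow, realize_distinctFormula,
    realize_sumTerm, Term.realize_var, List.map_ofFn, List.sum_ofFn, Function.comp_def,
    Sum.elim_inl, Sum.elim_inr, and_assoc]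

theorem realize_isSummand_two_pow {n e : ℕ} {x : Fin 1 → ℝ} :
    (isSummand n).Realize (Sum.elim x fun _ ↦ 2 ^ e) ↔
      ∃ T : Finset ℕ, T.card = n ∧ e ∈ T ∧ x 0 = ∑ i ∈ T, (2 : ℝ) ^ i := by
  have pow_inj : Function.Injective fun k : ℕ ↦ (2 : ℝ) ^ k :=
    pow_right_injective₀ two_pos (by norm_num)
  simp only [realize_isSummand, Sum.elim_inl, Sum.elim_inr]
  constructor
  · rintro ⟨p, hp, p_inj, ⟨j, hj⟩, hx⟩
    choose k hk using hp
    obtain rfl : p = fun i ↦ 2 ^ k i := funext hk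
    refine ⟨Finset.univ.map ⟨k, p_inj.of_comp (f := fun k : ℕ ↦ (2 : ℝ) ^ k)⟩, ?_, ?_, ?_⟩
    · simp
    · simpa using ⟨j, pow_inj hj⟩
    · simpa using hx
  · rintro ⟨T, hT, he, hx⟩
    let f : T ≃ Fin n := T.equivFinOfCardEq hT
    refine ⟨fun i ↦ 2 ^ (f.symm i : ℕ), fun i ↦ ⟨_, rfl⟩,
      pow_inj.comp (Subtype.val_injective.comp f.symm.injective), ⟨f ⟨e, he⟩, by simp⟩, ?_⟩
    rw [hx, f.symm.sum_comp fun t : T ↦ (2 : ℝ) ^ (t : ℕ), T.sum_coe_sort fun t ↦ (2 : ℝ) ^ t]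

theorem card_le_of_realize_isSummand {n : ℕ} {x : Fin 1 → ℝ} {s : Finset ℕ}
    (h : ∀ e ∈ s, (isSummand n).Realize (Sum.elim x fun _ ↦ 2 ^ e)) : s.card ≤ n := by
  obtain rfl | ⟨e₀, he₀⟩ := s.eq_empty_or_nonempty
  · simp
  obtain ⟨T, hT, -, hxT⟩ := realize_isSummand_two_pow.1 (h e₀ he₀)
  rw [← hT]
  refine Finset.card_le_card fun e he ↦ ?_
  obtain ⟨U, -, heU, hxU⟩ := realize_isSummand_two_pow.1 (h e he)
  have U_eq : U = T := injective_sum_pow (R := ℝ) le_rfl (by simpa using hxU.symm.trans hxT)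
  exact U_eq ▸ heU

theorem exists_realize_isSummand (s : Finset ℕ) :
    ∃ x : Fin 1 → ℝ, ∀ e ∈ s, (isSummand s.card).Realize (Sum.elim x fun _ ↦ 2 ^ e) :=
  ⟨fun _ ↦ ∑ i ∈ s, 2 ^ i, fun _ he ↦ realize_isSummand_two_pow.2 ⟨s, rfl, he, rfl⟩⟩

theorem isInpPattern_real (κ : Type*) [Finite κ] : IsInpPattern LoagP ℝ κ 1 :=
  isInpPattern_of_card_le (isSummand (Nat.card κ)) (fun e _ ↦ 2 ^ e)
    (fun _ _ ↦ card_le_of_realize_isSummand) fun s hs ↦ hs ▸ exists_realize_isSummand s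

end LoagP

/-- The theory of `⟨ℝ; 0, +, −, <, {2^k : k ∈ ℕ}⟩` does not have finite
burden: for every `n`, the structure itself witnesses an inp-pattern of depth `n` in a
single variable. -/
theorem statement_3 :
    (∀ n : ℕ, IsInpPattern LoagP ℝ (Fin n) 1) ∧ ¬ HasFiniteBurden LoagP ℝ := by
  have isInpPattern (n : ℕ) : IsInpPattern LoagP ℝ (Fin n) 1 := LoagP.isInpPattern_real (Fin n)
  exact ⟨isInpPattern, not_hasFiniteBurden_of_forall_isInpPattern isInpPattern⟩
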